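/- Fix p ≥ 1 and 0 < ε < 1. Let μ_1, ..., μ_k be finitely supported probability measures on ℝ^d and let π : ℝ^d → ℝ^m be a map such that (1−ε)·‖x−y‖ ≤ ‖π(x)−π(y)‖ ≤ (1+ε)·‖x−y‖ for all x, y in the union of the supports of the μ_i. Let OPT = inf over ν supported on at most n points of (1/k)·Σ_i W_p(μ_i, ν)^p, and OPT' the same infimum for the pushforward measures π_*μ_i in ℝ^m. Then OPT ≤ (1/(1−ε))^p · OPT'. -/

import Mathlib

open MeasureTheory

/-- The `p`-Wasserstein distance with Euclidean (norm) ground cost, defined as the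
infimum over couplings of the `p`-th root of the transport cost. -/
noncomputable def wassersteinDist {E : Type*} [NormedAddCommGroup E] [MeasurableSpace E]
    (p : ℝ) (μ ν : Measure E) : ℝ :=
  sInf {r : ℝ | ∃ γ : Measure (E × E), γ.map Prod.fst = μ ∧ γ.map Prod.snd = ν ∧
    r = (∫ z, ‖z.1 - z.2‖ ^ p ∂γ) ^ (1 / p)}

/-!
Let `S` be the union of the supports and `K = 1 / (1 - ε)`. By Kirszbraun's theorem the inverse of
`π` on `π(S)` extends to a map `g` with `‖x - g v‖ ≤ K * ‖π x - v‖` for all `x ∈ S` and all `v`;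
only this estimate between `π(S)` and an arbitrary point is needed, so extending the inverse to
one additional point at a time is enough. Since `g` sends `π_* μᵢ` back to `μᵢ`, pushing a
coupling of `π_* μᵢ` and `ν` forward by `g` gives a coupling of `μᵢ` and `g_* ν` whose cost has
grown by a factor at most `K`. Hence each candidate `ν` for the projected problem yields the
candidate `g_* ν` for the original one, on no more points and at most `K ^ p` times as expensive.

The one-point extension is a minimax statement: for weights `l` in the simplex, the parallel axis
identity shows that `∑ i, l i * (‖z - x i‖ ^ 2 - ‖b - y i‖ ^ 2)` is nonpositive at the barycenter
`z` of the `x i`, and a saddle point provides one `z` that works for all `l` at once.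
-/

lemma sInf_le_mul_sInf {A B : Set ℝ} {c : ℝ} (hc : 0 ≤ c) (hA : ∀ a ∈ A, 0 ≤ a)
    (hAB : A.Nonempty → B.Nonempty) (h : ∀ b ∈ B, ∃ a ∈ A, a ≤ c * b) :
    sInf A ≤ c * sInf B := by
  rcases B.eq_empty_or_nonempty with rfl | hB
  · simp [Set.not_nonempty_iff_eq_empty.1 fun hne => Set.not_nonempty_empty (hAB hne)]
  rw [← smul_eq_mul, ← Real.sInf_smul_of_nonneg hc]
  refine le_csInf hB.smul_set ?_
  rintro _ ⟨b, hb, rfl⟩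
  obtain ⟨a, ha, hab⟩ := h b hb
  exact (csInf_le ⟨0, hA⟩ ha).trans hab

lemma convexOn_norm_sub_sq {E : Type*} [SeminormedAddCommGroup E] [NormedSpace ℝ E] {s : Set E}
    (hs : Convex ℝ s) (a : E) : ConvexOn ℝ s fun z => ‖z - a‖ ^ 2 := by
  simp only [← dist_eq_norm]
  exact (convexOn_dist a hs).pow (fun _ _ => dist_nonneg) 2

section Kirszbraun

variable {ι E F : Type*} [NormedAddCommGroup E] [InnerProductSpace ℝ E]
  [NormedAddCommGroup F] [InnerProductSpace ℝ F]

lemma norm_sum_smul_sq [Fintype ι] {w : ι → ℝ} (hw : ∑ i, w i = 1) (u : ι → E) :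
    ‖∑ i, w i • u i‖ ^ 2 =
      ∑ i, w i * ‖u i‖ ^ 2 - (∑ i, ∑ j, w i * w j * ‖u i - u j‖ ^ 2) / 2 := by
  have h_left : ∑ i, ∑ j, w i * w j * ‖u i‖ ^ 2 = ∑ i, w i * ‖u i‖ ^ 2 := by
    simp only [← Finset.sum_mul, ← Finset.mul_sum, hw, mul_one]
  have h_right : ∑ i, ∑ j, w i * w j * ‖u j‖ ^ 2 = ∑ i, w i * ‖u i‖ ^ 2 := by
    simp only [mul_assoc, ← Finset.mul_sum, ← Finset.sum_mul, hw, one_mul]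
  have h_inner : ‖∑ i, w i • u i‖ ^ 2 = ∑ i, ∑ j, w i * w j * inner ℝ (u i) (u j) := by
    rw [← real_inner_self_eq_norm_sq, sum_inner]
    simp only [inner_sum, real_inner_smul_left, real_inner_smul_right, mul_assoc, mul_left_comm]
  have h_pairs : ∑ i, ∑ j, w i * w j * ‖u i - u j‖ ^ 2 =
      ∑ i, ∑ j, w i * w j * ‖u i‖ ^ 2 - 2 * ∑ i, ∑ j, w i * w j * inner ℝ (u i) (u j) +
        ∑ i, ∑ j, w i * w j * ‖u j‖ ^ 2 := by
    simp only [norm_sub_sq_real, mul_add, mul_sub, Finset.sum_add_distrib,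
      Finset.sum_sub_distrib, mul_left_comm _ (2 : ℝ), Finset.mul_sum]
  rw [h_pairs, h_left, h_right, ← h_inner]
  ring

lemma sum_mul_norm_sub_sq [Fintype ι] {w : ι → ℝ} (hw : ∑ i, w i = 1) (v : ι → E) (a : E) :
    ∑ i, w i * ‖a - v i‖ ^ 2 =
      ‖a - ∑ i, w i • v i‖ ^ 2 + (∑ i, ∑ j, w i * w j * ‖v i - v j‖ ^ 2) / 2 := by
  have h_translate : (∑ i, w i • v i) - a = ∑ i, w i • (v i - a) := by
    simp only [smul_sub, Finset.sum_sub_distrib, ← Finset.sum_smul, hw, one_smul]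
  simp only [norm_sub_rev a, h_translate, norm_sum_smul_sq hw, sub_sub_sub_cancel_right,
    sub_add_cancel]

lemma sum_mul_norm_sub_sq_le [Fintype ι] {x : ι → E} {y : ι → F}
    (h : ∀ i j, ‖x i - x j‖ ≤ ‖y i - y j‖) (b : F) {l : ι → ℝ} (hl : l ∈ stdSimplex ℝ ι) :
    ∑ i, l i * ‖(∑ j, l j • x j) - x i‖ ^ 2 ≤ ∑ i, l i * ‖b - y i‖ ^ 2 := by
  obtain ⟨hl_nonneg, hl_sum⟩ := hl
  rw [sum_mul_norm_sub_sq hl_sum, sum_mul_norm_sub_sq hl_sum, sub_self, norm_zero]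
  gcongr with i _ j _
  · exact norm_nonneg _
  · exact mul_nonneg (hl_nonneg i) (hl_nonneg j)
  · exact h i j

theorem kirszbraun_one_point [Finite ι] (x : ι → E) (y : ι → F)
    (h : ∀ i j, ‖x i - x j‖ ≤ ‖y i - y j‖) (b : F) :
    ∃ z : E, ∀ i, ‖z - x i‖ ≤ ‖b - y i‖ := by
  classical
  cases nonempty_fintype ι
  rcases isEmpty_or_nonempty ι with hι | hι
  · exact ⟨0, hι.elim⟩
  let excess (z : E) (l : ι → ℝ) : ℝ := ∑ i, l i * (‖z - x i‖ ^ 2 - ‖b - y i‖ ^ 2)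
  have h_convex (l) (hl : l ∈ stdSimplex ℝ ι) :
      ConvexOn ℝ (convexHull ℝ (Set.range x)) (excess · l) := by
    simp only [excess, mul_sub, Finset.sum_sub_distrib, sum_mul_norm_sub_sq hl.2, add_sub_assoc]
    exact (convexOn_norm_sub_sq (convex_convexHull ℝ _) _).add_const _
  have h_concave (z : E) : ConcaveOn ℝ (stdSimplex ℝ ι) (excess z) := by
    exact (Fintype.linearCombination ℝ fun i => ‖z - x i‖ ^ 2 - ‖b - y i‖ ^ 2).concaveOn
      (convex_stdSimplex ℝ ι)
  obtain ⟨z, -, l, hl, h_saddle⟩ := Sion.exists_isSaddlePointOn (f := excess)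
    (Set.range_nonempty x).convexHull (convex_convexHull ℝ _)
    ((Set.finite_range x).isCompact_convexHull ℝ)
    (fun l _ => Continuous.lowerSemicontinuous (by fun_prop) |>.lowerSemicontinuousOn _)
    (fun l hl => (h_convex l hl).quasiconvexOn) (convex_stdSimplex ℝ ι)
    ⟨_, single_mem_stdSimplex ℝ (Classical.arbitrary ι)⟩ (isCompact_stdSimplex ℝ ι)
    (fun z _ => Continuous.upperSemicontinuous (by fun_prop) |>.upperSemicontinuousOn _)
    (fun z _ => (h_concave z).quasiconcaveOn)
  refine ⟨z, fun i => ?_⟩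
  have h_mem : ∑ j, l j • x j ∈ convexHull ℝ (Set.range x) :=
    (convex_convexHull ℝ _).sum_mem (fun j _ => hl.1 j) hl.2
      fun j _ => subset_convexHull ℝ _ (Set.mem_range_self j)
  have h_excess : excess z (Pi.single i 1) ≤ 0 := calc
    excess z (Pi.single i 1) ≤ excess (∑ j, l j • x j) l :=
      h_saddle _ h_mem _ (single_mem_stdSimplex ℝ i)
    _ ≤ 0 := by
      simpa [excess, mul_sub, Finset.sum_sub_distrib] using sum_mul_norm_sub_sq_le h b hl
  refine le_of_sq_le_sq ?_ (norm_nonneg _)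
  simpa [excess, Pi.single_apply] using h_excess

theorem exists_inverse_extension_norm_sub_le {K : ℝ} (hK : 0 ≤ K) {π : E → F} {S : Set E}
    (hS : S.Finite) (hπ : ∀ x ∈ S, ∀ y ∈ S, ‖x - y‖ ≤ K * ‖π x - π y‖) :
    ∃ g : F → E, ∀ x ∈ S, ∀ v, ‖x - g v‖ ≤ K * ‖π x - v‖ := by
  have : Finite S := hS
  have h_point (v : F) : ∃ z : E, ∀ x : S, ‖z - x‖ ≤ ‖K • v - K • π x‖ :=
    kirszbraun_one_point _ _ (fun x y => by
      simpa only [← smul_sub, norm_smul, Real.norm_of_nonneg hK] using hπ x x.2 y y.2) _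
  choose g hg using h_point
  refine ⟨g, fun x hx v => ?_⟩
  simpa only [← smul_sub, norm_smul, Real.norm_of_nonneg hK, norm_sub_rev] using hg v ⟨x, hx⟩

end Kirszbraun

section FiniteSupport

variable {α β : Type*} [MeasurableSpace α] [MeasurableSingletonClass α] [MeasurableSpace β]
  {μ : Measure α} {s : Finset α}

lemma aemeasurable_of_ae_mem_finset (hs : ∀ᵐ x ∂μ, x ∈ s) (f : α → β) : AEMeasurable f μ := by
  rw [← Measure.restrict_eq_self_of_ae_mem (s := (s : Set α)) hs]
  exact aemeasurable_restrict_of_measurable_subtype s.measurableSet (measurable_of_countable _)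

lemma integrable_of_ae_mem_finset [IsFiniteMeasure μ] {E : Type*} [NormedAddCommGroup E]
    (hs : ∀ᵐ x ∂μ, x ∈ s) (f : α → E) : Integrable f μ := by
  rw [← Measure.restrict_eq_self_of_ae_mem (s := (s : Set α)) hs]
  exact IntegrableOn.finset

lemma ae_map_mem_finset_image [MeasurableSingletonClass β] [DecidableEq β]
    (hs : ∀ᵐ x ∂μ, x ∈ s) (f : α → β) : ∀ᵐ y ∂μ.map f, y ∈ s.image f := by
  refine (ae_map_iff (aemeasurable_of_ae_mem_finset hs f) (s.image f).measurableSet).2 ?_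
  filter_upwards [hs] with x hx using Finset.mem_image_of_mem f hx

/-- `ν` is a probability measure carried by at most `n` points: an admissible candidate for the
`n`-point barycenter problem. -/
def IsNPointProbability (n : ℕ) (ν : Measure α) : Prop :=
  IsProbabilityMeasure ν ∧ ∃ t : Finset α, t.card ≤ n ∧ ν (↑t)ᶜ = 0

lemma IsNPointProbability.map [MeasurableSingletonClass β] {n : ℕ} {ν : Measure α}
    (hν : IsNPointProbability n ν) (f : α → β) : IsNPointProbability n (ν.map f) := by
  classical
  obtain ⟨hν_prob, t, ht_card, ht⟩ := hν
  exact ⟨Measure.isProbabilityMeasure_map (aemeasurable_of_ae_mem_finset ht f),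
    t.image f, Finset.card_image_le.trans ht_card, ae_map_mem_finset_image ht f⟩

end FiniteSupport

section Wasserstein

variable {E F : Type*} [NormedAddCommGroup E] [MeasurableSpace E]
  [NormedAddCommGroup F] [MeasurableSpace F]

lemma wassersteinDist_nonneg (p : ℝ) (μ ν : Measure E) : 0 ≤ wassersteinDist p μ ν := by
  refine Real.sInf_nonneg ?_
  rintro _ ⟨γ, -, -, rfl⟩
  positivity

variable [MeasurableSingletonClass E] [MeasurableSingletonClass F]

lemma transportCost_map_le {p : ℝ} (hp : 0 < p) {L : ℝ} (hL : 0 ≤ L) {γ : Measure (F × F)}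
    [IsFiniteMeasure γ] {c : Finset (F × F)} (hγ : ∀ᵐ z ∂γ, z ∈ c) {g : F → E}
    (hg : ∀ z ∈ c, ‖g z.1 - g z.2‖ ≤ L * ‖z.1 - z.2‖) :
    (∫ z, ‖z.1 - z.2‖ ^ p ∂(γ.map (Prod.map g g))) ^ (1 / p) ≤
      L * (∫ z, ‖z.1 - z.2‖ ^ p ∂γ) ^ (1 / p) := by
  classical
  have h_push : ∫ z, ‖z.1 - z.2‖ ^ p ∂(γ.map (Prod.map g g)) =
      ∫ z, ‖g z.1 - g z.2‖ ^ p ∂γ :=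
    integral_map (aemeasurable_of_ae_mem_finset hγ _)
      (aemeasurable_of_ae_mem_finset (ae_map_mem_finset_image hγ _) _).aestronglyMeasurable
  have h_cost : ∫ z, ‖g z.1 - g z.2‖ ^ p ∂γ ≤ L ^ p * ∫ z, ‖z.1 - z.2‖ ^ p ∂γ := by
    rw [← integral_const_mul]
    refine integral_mono_ae (integrable_of_ae_mem_finset hγ _)
      (integrable_of_ae_mem_finset hγ _) ?_
    filter_upwards [hγ] with z hz
    rw [← Real.mul_rpow hL (norm_nonneg _)]
    exact Real.rpow_le_rpow (norm_nonneg _) (hg z hz) hp.le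
  calc (∫ z, ‖z.1 - z.2‖ ^ p ∂(γ.map (Prod.map g g))) ^ (1 / p)
      ≤ (L ^ p * ∫ z, ‖z.1 - z.2‖ ^ p ∂γ) ^ (1 / p) := by
        rw [h_push]
        gcongr
    _ = L * (∫ z, ‖z.1 - z.2‖ ^ p ∂γ) ^ (1 / p) := by
        rw [Real.mul_rpow (by positivity) (by positivity), one_div,
          Real.rpow_rpow_inv hL hp.ne']

theorem wassersteinDist_map_le {p : ℝ} (hp : 0 < p) {L : ℝ} (hL : 0 ≤ L) {μ ν : Measure F}
    [IsProbabilityMeasure μ] [IsProbabilityMeasure ν] {a b : Finset F}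
    (hμ : ∀ᵐ u ∂μ, u ∈ a) (hν : ∀ᵐ v ∂ν, v ∈ b) {g : F → E}
    (hg : ∀ u ∈ a, ∀ v ∈ b, ‖g u - g v‖ ≤ L * ‖u - v‖) :
    wassersteinDist p (μ.map g) (ν.map g) ≤ L * wassersteinDist p μ ν := by
  refine sInf_le_mul_sInf hL ?_ (fun _ => ⟨_, μ.prod ν, by simp, by simp, rfl⟩) ?_
  · rintro _ ⟨γ, -, -, rfl⟩
    positivity
  rintro _ ⟨γ, rfl, rfl, rfl⟩
  have : IsProbabilityMeasure γ :=
    (Measure.isProbabilityMeasure_map_iff measurable_fst.aemeasurable).1 ‹_›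
  have hγ : ∀ᵐ z ∂γ, z ∈ a ×ˢ b := by
    filter_upwards [ae_of_ae_map measurable_fst.aemeasurable hμ,
      ae_of_ae_map measurable_snd.aemeasurable hν] with z hz₁ hz₂
      using Finset.mk_mem_product hz₁ hz₂
  have hgg : AEMeasurable (Prod.map g g) γ := aemeasurable_of_ae_mem_finset hγ _
  refine ⟨_, ⟨γ.map (Prod.map g g), ?_, ?_, rfl⟩, transportCost_map_le hp hL hγ fun z hz =>
    hg z.1 (Finset.mem_product.1 hz).1 z.2 (Finset.mem_product.1 hz).2⟩
  · rw [AEMeasurable.map_map_of_aemeasurable measurable_fst.aemeasurable hgg,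
      AEMeasurable.map_map_of_aemeasurable (aemeasurable_of_ae_mem_finset hμ g)
        measurable_fst.aemeasurable]
    rfl
  · rw [AEMeasurable.map_map_of_aemeasurable measurable_snd.aemeasurable hgg,
      AEMeasurable.map_map_of_aemeasurable (aemeasurable_of_ae_mem_finset hν g)
        measurable_snd.aemeasurable]
    rfl

lemma wassersteinDist_le_mul_wassersteinDist_map {p : ℝ} (hp : 0 < p) {K : ℝ} (hK : 0 ≤ K)
    {μ : Measure E} [IsProbabilityMeasure μ] {S : Finset E} (hμ : ∀ᵐ x ∂μ, x ∈ S)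
    {ν : Measure F} [IsProbabilityMeasure ν] {t : Finset F} (hν : ∀ᵐ v ∂ν, v ∈ t)
    {π : E → F} {g : F → E} (hg : ∀ x ∈ S, ∀ v, ‖x - g v‖ ≤ K * ‖π x - v‖) :
    wassersteinDist p μ (ν.map g) ≤ K * wassersteinDist p (μ.map π) ν := by
  classical
  have hgπ (x) (hx : x ∈ S) : g (π x) = x := by
    simpa [sub_eq_zero, eq_comm] using hg x hx (π x)
  have hπ : AEMeasurable π μ := aemeasurable_of_ae_mem_finset hμ π
  have : IsProbabilityMeasure (μ.map π) := Measure.isProbabilityMeasure_map hπ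
  have h_mem : ∀ᵐ u ∂μ.map π, u ∈ S.image π := ae_map_mem_finset_image hμ π
  have h_recover : (μ.map π).map g = μ := by
    rw [AEMeasurable.map_map_of_aemeasurable (aemeasurable_of_ae_mem_finset h_mem g) hπ,
      Measure.map_congr (hμ.mono hgπ : g ∘ π =ᵐ[μ] id), Measure.map_id]
  have h_le := wassersteinDist_map_le (g := g) hp hK h_mem hν <| Finset.forall_mem_image.2
    fun x hx v _ => by simpa only [hgπ x hx] using hg x hx v
  rwa [h_recover] at h_le

end Wasserstein

section Barycenter

/-- The optimal value of the `n`-point `p`-Wasserstein barycenter problem for the measures `μ i`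
with weights `w i`. -/
noncomputable def barycenterOpt {ι E : Type*} [Fintype ι] [NormedAddCommGroup E]
    [MeasurableSpace E] (n : ℕ) (p : ℝ) (w : ι → ℝ) (μ : ι → Measure E) : ℝ :=
  sInf {r : ℝ | ∃ ν : Measure E, IsNPointProbability n ν ∧
    r = ∑ i, w i * wassersteinDist p (μ i) ν ^ p}

variable {ι E F : Type*}
  [NormedAddCommGroup E] [InnerProductSpace ℝ E] [MeasurableSpace E] [MeasurableSingletonClass E]
  [NormedAddCommGroup F] [InnerProductSpace ℝ F] [MeasurableSpace F] [MeasurableSingletonClass F]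

theorem barycenter_cost_preserved_by_biLipschitz_projection_general [Fintype ι] {n : ℕ} {p : ℝ}
    (hp : 0 < p) {w : ι → ℝ} (hw : ∀ i, 0 ≤ w i) {μ : ι → Measure E}
    [∀ i, IsProbabilityMeasure (μ i)] {S : Finset E} (hμ : ∀ i, ∀ᵐ x ∂μ i, x ∈ S)
    {K : ℝ} (hK : 0 ≤ K) {π : E → F} (hπ : ∀ x ∈ S, ∀ y ∈ S, ‖x - y‖ ≤ K * ‖π x - π y‖) :
    barycenterOpt n p w μ ≤ K ^ p * barycenterOpt n p w fun i => (μ i).map π := by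
  obtain ⟨g, hg⟩ := exists_inverse_extension_norm_sub_le hK S.finite_toSet hπ
  refine sInf_le_mul_sInf (by positivity) ?_ ?_ ?_
  · rintro _ ⟨ν, -, rfl⟩
    exact Finset.sum_nonneg fun i _ =>
      mul_nonneg (hw i) (Real.rpow_nonneg (wassersteinDist_nonneg _ _ _) _)
  · rintro ⟨_, ν, hν, -⟩
    exact ⟨_, ν.map π, hν.map π, rfl⟩
  rintro _ ⟨ν, hν, rfl⟩
  refine ⟨_, ⟨ν.map g, hν.map g, rfl⟩, ?_⟩
  obtain ⟨hν_prob, t, -, ht⟩ := hν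
  rw [Finset.mul_sum]
  refine Finset.sum_le_sum fun i _ => ?_
  rw [mul_left_comm, ← Real.mul_rpow hK (wassersteinDist_nonneg _ _ _)]
  gcongr
  · exact hw i
  · exact wassersteinDist_nonneg _ _ _
  · exact wassersteinDist_le_mul_wassersteinDist_map hp hK (hμ i) ht hg

end Barycenter

theorem barycenter_cost_preserved_by_biLipschitz_projection {d m k n : ℕ} (hk : 0 < k)
    (p ε : ℝ) (hp : 1 ≤ p) (hε : 0 < ε) (hε1 : ε < 1)
    (μs : Fin k → Measure (EuclideanSpace ℝ (Fin d)))
    (hprob : ∀ i, IsProbabilityMeasure (μs i))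
    (s : Fin k → Finset (EuclideanSpace ℝ (Fin d)))
    (hs : ∀ i, μs i (↑(s i))ᶜ = 0)
    (π : EuclideanSpace ℝ (Fin d) → EuclideanSpace ℝ (Fin m)) (hπm : Measurable π)
    (hπ : ∀ x ∈ ⋃ i, (↑(s i) : Set (EuclideanSpace ℝ (Fin d))),
          ∀ y ∈ ⋃ i, (↑(s i) : Set (EuclideanSpace ℝ (Fin d))),
      (1 - ε) * ‖x - y‖ ≤ ‖π x - π y‖ ∧ ‖π x - π y‖ ≤ (1 + ε) * ‖x - y‖) :
    sInf {r : ℝ | ∃ ν : Measure (EuclideanSpace ℝ (Fin d)), IsProbabilityMeasure ν ∧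
        (∃ t : Finset (EuclideanSpace ℝ (Fin d)), t.card ≤ n ∧ ν (↑t)ᶜ = 0) ∧
        r = (1 / (k : ℝ)) * ∑ i, wassersteinDist p (μs i) ν ^ p} ≤
      (1 / (1 - ε)) ^ p *
        sInf {r : ℝ | ∃ ν : Measure (EuclideanSpace ℝ (Fin m)), IsProbabilityMeasure ν ∧
          (∃ t : Finset (EuclideanSpace ℝ (Fin m)), t.card ≤ n ∧ ν (↑t)ᶜ = 0) ∧
          r = (1 / (k : ℝ)) * ∑ i, wassersteinDist p ((μs i).map π) ν ^ p} := by
  classical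
  have h_gap : 0 < 1 - ε := sub_pos.2 hε1
  have h_ae (i) : ∀ᵐ x ∂μs i, x ∈ Finset.univ.biUnion s := by
    filter_upwards [show ∀ᵐ x ∂μs i, x ∈ s i from hs i] with x hx
      using Finset.mem_biUnion.2 ⟨i, Finset.mem_univ i, hx⟩
  have h_inv : ∀ x ∈ Finset.univ.biUnion s, ∀ y ∈ Finset.univ.biUnion s,
      ‖x - y‖ ≤ 1 / (1 - ε) * ‖π x - π y‖ := fun x hx y hy => by
    rw [one_div_mul_eq_div, le_div_iff₀' h_gap]
    exact (hπ x (by simpa using hx) y (by simpa using hy)).1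
  simpa only [barycenterOpt, IsNPointProbability, and_assoc, ← Finset.mul_sum] using
    barycenter_cost_preserved_by_biLipschitz_projection_general (n := n)
      (zero_lt_one.trans_le hp) (w := fun _ => 1 / (k : ℝ)) (fun _ => by positivity) h_ae
      (one_div_pos.2 h_gap).le h_inv
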